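/- arXiv:1708.02521 — 2 statements merged into one kernel-verified Lean document; each statement's English description precedes it below -/
import Mathlib

section
/- Let Z₁,…,Z_n be i.i.d. standard normal random variables. Then E[(max_{1≤l≤n} (l+1)^{−1}|Σ_{i=1}^l Z_i|)²] ≤ 16 Σ_{i=1}^n i^{−2}; in particular this quantity is at most 8π²/3. -/
open MeasureTheory ProbabilityTheory

/-!
Let `S` be a square-integrable martingale and `b` a positive nondecreasing sequence. The weighted
sums `T n = ∑ i < n, (S (i + 1) - S i) / b i` form a martingale, and summation by parts recovers
`S` from `T`, giving `|S n - S 0| ≤ 2 * b n * max_{k ≤ n} |T k|`. Doob's `L²` inequality applied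
to `|T|` costs a factor `4`, and orthogonality of increments computes `E[T n ²]`; together they give
the constant `2² * 4 = 16`. For the theorem, `S` is the Gaussian random walk and `b k = k + 1`.

Doob's inequality follows by integrating a pathwise one: with `M` the running maximum of a
real sequence `x`, one has `M n ² + 4 * ∑ k < n, M k * (x (k + 1) - x k) ≤ 4 * x n ²`, and for a
nonnegative submartingale the sum has nonnegative expectation.
-/

section Pathwise

lemma partialSups_sq_add_four_mul_sum_le (x : ℕ → ℝ) (n : ℕ) :
    partialSups x n ^ 2 + 4 * ∑ k ∈ Finset.range n, partialSups x k * (x (k + 1) - x k)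
      ≤ 4 * x n ^ 2 := by
  have sum_le : 2 * ∑ k ∈ Finset.range n, partialSups x k * (x (k + 1) - x k)
      ≤ 2 * partialSups x n * x n - partialSups x n ^ 2 := by
    induction n with
    | zero =>
      rw [Finset.sum_range_zero, partialSups_zero]
      linarith [sq_nonneg (x 0)]
    | succ n ih =>
      rw [Finset.sum_range_succ, partialSups_add_one]
      rcases max_choice (partialSups x n) (x (n + 1)) with h | h <;> rw [h]
      · linarith
      · linarith [sq_nonneg (partialSups x n - x (n + 1))]
  linarith [sq_nonneg (2 * x n - partialSups x n)]

variable {E : Type*} [NormedAddCommGroup E] [NormedSpace ℝ E]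

lemma sum_range_smul_sub_eq (b : ℕ → ℝ) (t : ℕ → E) (n : ℕ) :
    ∑ i ∈ Finset.range n, b i • (t (i + 1) - t i)
      = b n • t n - b 0 • t 0 - ∑ i ∈ Finset.range n, (b (i + 1) - b i) • t (i + 1) := by
  induction n with
  | zero => simp
  | succ n ih =>
    rw [Finset.sum_range_succ, Finset.sum_range_succ, ih]
    module

lemma norm_sum_range_smul_sub_le {b : ℕ → ℝ} (hb : Monotone b) (hb₀ : 0 ≤ b 0) (t : ℕ → E)
    (n : ℕ) :
    ‖∑ i ∈ Finset.range n, b i • (t (i + 1) - t i)‖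
      ≤ 2 * b n * partialSups (fun k => ‖t k‖) n := by
  set M := partialSups (fun k => ‖t k‖) n
  have norm_smul_le {c : ℝ} (hc : 0 ≤ c) {k : ℕ} (hk : k ≤ n) : ‖c • t k‖ ≤ c * M := by
    rw [norm_smul, Real.norm_of_nonneg hc]
    exact mul_le_mul_of_nonneg_left (le_partialSups_of_le (fun k => ‖t k‖) hk) hc
  calc ‖∑ i ∈ Finset.range n, b i • (t (i + 1) - t i)‖
      ≤ ‖b n • t n‖ + ‖b 0 • t 0‖ + ∑ i ∈ Finset.range n, ‖(b (i + 1) - b i) • t (i + 1)‖ := by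
        rw [sum_range_smul_sub_eq]
        grw [norm_sub_le, norm_sub_le, norm_sum_le]
    _ ≤ b n * M + b 0 * M + ∑ i ∈ Finset.range n, (b (i + 1) - b i) * M := by
        gcongr with i hi
        · exact norm_smul_le (hb₀.trans (hb n.zero_le)) le_rfl
        · exact norm_smul_le hb₀ n.zero_le
        · exact norm_smul_le (sub_nonneg.2 (hb i.le_succ)) (Finset.mem_range.1 hi)
    _ = 2 * b n * M := by
        rw [← Finset.sum_mul, Finset.sum_range_sub]
        ring

lemma partialSups_norm_sub_div_le {b : ℕ → ℝ} (hb : Monotone b) (hb₀ : 0 < b 0) (x : ℕ → E)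
    (n : ℕ) :
    partialSups (fun k => ‖x k - x 0‖ / b k) n
      ≤ 2 * partialSups (fun k => ‖∑ i ∈ Finset.range k, (b i)⁻¹ • (x (i + 1) - x i)‖) n := by
  have hb_pos (k : ℕ) : 0 < b k := hb₀.trans_le (hb k.zero_le)
  set t : ℕ → E := fun k => ∑ i ∈ Finset.range k, (b i)⁻¹ • (x (i + 1) - x i) with ht
  refine partialSups_le _ _ _ fun k hk => (div_le_iff₀ (hb_pos k)).2 ?_
  calc ‖x k - x 0‖
      = ‖∑ i ∈ Finset.range k, b i • (t (i + 1) - t i)‖ := by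
        simp only [ht, Finset.sum_range_succ_sub_sum, smul_inv_smul₀ (hb_pos _).ne',
          Finset.sum_range_sub]
    _ ≤ 2 * b k * partialSups (fun i => ‖t i‖) k := norm_sum_range_smul_sub_le hb hb₀.le t k
    _ ≤ 2 * b k * partialSups (fun i => ‖t i‖) n :=
        mul_le_mul_of_nonneg_left ((partialSups _).monotone hk) (by linarith [hb_pos k])
    _ = 2 * partialSups (fun i => ‖t i‖) n * b k := by ring

end Pathwise

section Martingale

lemma stronglyMeasurable_partialSups {Ω β : Type*} {m : MeasurableSpace Ω} [TopologicalSpace β]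
    [SemilatticeSup β] [ContinuousSup β] {f : ℕ → Ω → β} {n : ℕ}
    (hf : ∀ k ≤ n, StronglyMeasurable (f k)) : StronglyMeasurable (partialSups f n) := by
  rw [partialSups_eq_sup'_range]
  exact Finset.sup'_induction (p := StronglyMeasurable) _ _ (fun _ h₁ _ h₂ => h₁.sup h₂)
    fun k hk => hf k (Finset.mem_range_succ_iff.1 hk)

variable {Ω : Type*} {m₀ : MeasurableSpace Ω} {μ : Measure Ω} {ℱ : Filtration ℕ m₀}

lemma stronglyAdapted_partialSups {β : Type*} [TopologicalSpace β] [SemilatticeSup β]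
    [ContinuousSup β] {f : ℕ → Ω → β} (hf : StronglyAdapted ℱ f) :
    StronglyAdapted ℱ (partialSups f) :=
  fun _ => stronglyMeasurable_partialSups fun k hk => (hf k).mono (ℱ.mono hk)

lemma memLp_partialSups {p : ENNReal} {f : ℕ → Ω → ℝ} (hf : ∀ k, MemLp (f k) p μ) (n : ℕ) :
    MemLp (partialSups f n) p μ := by
  rw [partialSups_eq_sup'_range]
  exact Finset.sup'_induction (p := (MemLp · p μ)) _ _ (fun _ h₁ _ h₂ => h₁.sup h₂)
    fun k _ => hf k

lemma integral_mul_condExp {m : MeasurableSpace Ω} (hm : m ≤ m₀) [SigmaFinite (μ.trim hm)]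
    {f g : Ω → ℝ} (hf : StronglyMeasurable[m] f) (hfg : Integrable (f * g) μ)
    (hg : Integrable g μ) : ∫ ω, f ω * (μ[g | m]) ω ∂μ = ∫ ω, f ω * g ω ∂μ :=
  calc ∫ ω, f ω * (μ[g | m]) ω ∂μ
      = ∫ ω, (μ[f * g | m]) ω ∂μ :=
        integral_congr_ae (condExp_mul_of_stronglyMeasurable_left hf hfg hg).symm
    _ = ∫ ω, f ω * g ω ∂μ := integral_condExp hm

lemma integral_mul_sub_nonneg_of_submartingale [SigmaFiniteFiltration μ ℱ] {f : ℕ → Ω → ℝ}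
    (hf : Submartingale f ℱ μ) (hL2 : ∀ k, MemLp (f k) 2 μ) {g : Ω → ℝ} {i j : ℕ} (hij : i ≤ j)
    (hg : StronglyMeasurable[ℱ i] g) (hg_nonneg : 0 ≤ g) (hgL2 : MemLp g 2 μ) :
    0 ≤ ∫ ω, g ω * (f j ω - f i ω) ∂μ := by
  have pull_out := integral_mul_condExp (ℱ.le i) hg (hgL2.integrable_mul ((hL2 j).sub (hL2 i)))
    ((hf.integrable j).sub (hf.integrable i))
  simp only [Pi.sub_apply] at pull_out
  rw [← pull_out]
  refine integral_nonneg_of_ae ?_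
  filter_upwards [hf.condExp_sub_nonneg hij] with ω hω using mul_nonneg (hg_nonneg ω) hω

lemma integral_mul_sub_eq_zero_of_martingale [SigmaFiniteFiltration μ ℱ] {f : ℕ → Ω → ℝ}
    (hf : Martingale f ℱ μ) (hL2 : ∀ k, MemLp (f k) 2 μ) {g : Ω → ℝ} {i j : ℕ} (hij : i ≤ j)
    (hg : StronglyMeasurable[ℱ i] g) (hgL2 : MemLp g 2 μ) :
    ∫ ω, g ω * (f j ω - f i ω) ∂μ = 0 := by
  have integrable (k : ℕ) : Integrable (fun ω => g ω * f k ω) μ := hgL2.integrable_mul (hL2 k)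
  have pull_out : ∫ ω, g ω * f i ω ∂μ = ∫ ω, g ω * f j ω ∂μ := by
    rw [← integral_mul_condExp (ℱ.le i) hg (integrable j) (hf.integrable j)]
    refine integral_congr_ae ?_
    filter_upwards [hf.condExp_ae_eq hij] with ω hω
    rw [hω]
  simp only [mul_sub]
  rw [integral_sub (integrable j) (integrable i), pull_out, sub_self]

theorem integral_partialSups_sq_le_of_submartingale [SigmaFiniteFiltration μ ℱ] {f : ℕ → Ω → ℝ}
    (hf : Submartingale f ℱ μ) (hf_nonneg : 0 ≤ f) (hL2 : ∀ k, MemLp (f k) 2 μ) (n : ℕ) :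
    ∫ ω, partialSups f n ω ^ 2 ∂μ ≤ 4 * ∫ ω, f n ω ^ 2 ∂μ := by
  have sup_nonneg (k : ℕ) : 0 ≤ partialSups f k := (hf_nonneg k).trans (le_partialSups f k)
  have integrable_sq := (memLp_partialSups hL2 n).integrable_sq
  have integrable_gain (k : ℕ) :
      Integrable (fun ω => partialSups f k ω * (f (k + 1) ω - f k ω)) μ :=
    (memLp_partialSups hL2 k).integrable_mul ((hL2 (k + 1)).sub (hL2 k))
  have integrable_sum_gain := integrable_finsetSum (Finset.range n) fun k _ => integrable_gain k
  have integral_gain_nonneg :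
      0 ≤ ∑ k ∈ Finset.range n, ∫ ω, partialSups f k ω * (f (k + 1) ω - f k ω) ∂μ :=
    Finset.sum_nonneg fun k _ => integral_mul_sub_nonneg_of_submartingale hf hL2 k.le_succ
      (stronglyAdapted_partialSups hf.stronglyAdapted k) (sup_nonneg k) (memLp_partialSups hL2 k)
  calc ∫ ω, partialSups f n ω ^ 2 ∂μ
      ≤ ∫ ω, partialSups f n ω ^ 2 ∂μ
          + 4 * ∑ k ∈ Finset.range n, ∫ ω, partialSups f k ω * (f (k + 1) ω - f k ω) ∂μ := by
        linarith
    _ = ∫ ω, (partialSups f n ω ^ 2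
          + 4 * ∑ k ∈ Finset.range n, partialSups f k ω * (f (k + 1) ω - f k ω)) ∂μ := by
        rw [integral_add integrable_sq (integrable_sum_gain.const_mul 4), integral_const_mul,
          integral_finsetSum _ fun k _ => integrable_gain k]
    _ ≤ ∫ ω, 4 * f n ω ^ 2 ∂μ := by
        refine integral_mono (integrable_sq.add (integrable_sum_gain.const_mul 4))
          ((hL2 n).integrable_sq.const_mul 4) fun ω => ?_
        simpa only [Pi.partialSups_apply] using
          partialSups_sq_add_four_mul_sum_le (fun k => f k ω) n
    _ = 4 * ∫ ω, f n ω ^ 2 ∂μ := integral_const_mul _ _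

theorem integral_partialSups_abs_sq_le_of_martingale [SigmaFiniteFiltration μ ℱ] {f : ℕ → Ω → ℝ}
    (hf : Martingale f ℱ μ) (hL2 : ∀ k, MemLp (f k) 2 μ) (n : ℕ) :
    ∫ ω, partialSups |f| n ω ^ 2 ∂μ ≤ 4 * ∫ ω, f n ω ^ 2 ∂μ := by
  have abs_submartingale : Submartingale |f| ℱ μ := hf.submartingale.sup hf.neg.submartingale
  simpa only [Pi.abs_apply, sq_abs] using
    integral_partialSups_sq_le_of_submartingale abs_submartingale (abs_nonneg f)
      (fun k => (hL2 k).abs) n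

lemma integral_sq_eq_add_sum_of_martingale [SigmaFiniteFiltration μ ℱ] {f : ℕ → Ω → ℝ}
    (hf : Martingale f ℱ μ) (hL2 : ∀ k, MemLp (f k) 2 μ) (n : ℕ) :
    ∫ ω, f n ω ^ 2 ∂μ
      = ∫ ω, f 0 ω ^ 2 ∂μ + ∑ i ∈ Finset.range n, ∫ ω, (f (i + 1) ω - f i ω) ^ 2 ∂μ := by
  induction n with
  | zero => simp
  | succ n ih =>
    have incr_memLp : MemLp (fun ω => f (n + 1) ω - f n ω) 2 μ := (hL2 (n + 1)).sub (hL2 n)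
    have integrable_sq := (hL2 n).integrable_sq
    have integrable_incr_sq := incr_memLp.integrable_sq
    have integrable_cross : Integrable (fun ω => 2 * (f n ω * (f (n + 1) ω - f n ω))) μ :=
      ((hL2 n).integrable_mul incr_memLp).const_mul 2
    have orthogonal : ∫ ω, f n ω * (f (n + 1) ω - f n ω) ∂μ = 0 :=
      integral_mul_sub_eq_zero_of_martingale hf hL2 n.le_succ (hf.stronglyMeasurable n) (hL2 n)
    calc ∫ ω, f (n + 1) ω ^ 2 ∂μ
        = ∫ ω, (f n ω ^ 2 + (f (n + 1) ω - f n ω) ^ 2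
            + 2 * (f n ω * (f (n + 1) ω - f n ω))) ∂μ := by
          congr 1 with ω
          ring
      _ = ∫ ω, f n ω ^ 2 ∂μ + ∫ ω, (f (n + 1) ω - f n ω) ^ 2 ∂μ := by
          rw [integral_add (f := fun ω => f n ω ^ 2 + _) (integrable_sq.add integrable_incr_sq)
            integrable_cross, integral_add integrable_sq integrable_incr_sq, integral_const_mul,
            orthogonal, mul_zero, add_zero]
      _ = ∫ ω, f 0 ω ^ 2 ∂μ
            + ∑ i ∈ Finset.range (n + 1), ∫ ω, (f (i + 1) ω - f i ω) ^ 2 ∂μ := by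
          rw [ih, Finset.sum_range_succ, add_assoc]

lemma martingale_sum_range_smul_sub [IsFiniteMeasure μ] {E : Type*} [NormedAddCommGroup E]
    [NormedSpace ℝ E] [CompleteSpace E] {f : ℕ → Ω → E} (hf : Martingale f ℱ μ) (c : ℕ → ℝ) :
    Martingale (fun n => ∑ i ∈ Finset.range n, c i • (f (i + 1) - f i)) ℱ μ := by
  have integrable_incr (i : ℕ) : Integrable (f (i + 1) - f i) μ :=
    (hf.integrable (i + 1)).sub (hf.integrable i)
  refine martingale_of_condExp_sub_eq_zero_nat (fun n => ?_)
    (fun n => integrable_finsetSum' _ fun i _ => (integrable_incr i).smul (c i)) fun n => ?_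
  · refine Finset.stronglyMeasurable_sum _ fun i hi => StronglyMeasurable.const_smul ?_ (c i)
    have hi := Finset.mem_range.1 hi
    exact (hf.stronglyAdapted.stronglyMeasurable_le hi).sub
      (hf.stronglyAdapted.stronglyMeasurable_le hi.le)
  · rw [Finset.sum_range_succ_sub_sum]
    filter_upwards [condExp_smul (μ := μ) (c n) (f (n + 1) - f n) (ℱ n),
      condExp_sub (hf.integrable (n + 1)) (hf.integrable n) (ℱ n),
      hf.condExp_ae_eq n.le_succ, hf.condExp_ae_eq (le_refl n)] with ω h_smul h_sub h_succ h_self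
    rw [h_smul, Pi.smul_apply, h_sub, Pi.sub_apply, h_succ, h_self, sub_self, smul_zero,
      Pi.zero_apply]

theorem integral_partialSups_abs_sub_div_sq_le_of_martingale [IsFiniteMeasure μ] {f : ℕ → Ω → ℝ}
    (hf : Martingale f ℱ μ) (hL2 : ∀ k, MemLp (f k) 2 μ) {b : ℕ → ℝ} (hb : Monotone b)
    (hb₀ : 0 < b 0) (n : ℕ) :
    ∫ ω, partialSups (fun k ω => |f k ω - f 0 ω| / b k) n ω ^ 2 ∂μ
      ≤ 16 * ∑ i ∈ Finset.range n, (∫ ω, (f (i + 1) ω - f i ω) ^ 2 ∂μ) / b i ^ 2 := by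
  let T : ℕ → Ω → ℝ := fun n => ∑ i ∈ Finset.range n, (b i)⁻¹ • (f (i + 1) - f i)
  have T_apply (k : ℕ) (ω : Ω) :
      T k ω = ∑ i ∈ Finset.range k, (b i)⁻¹ * (f (i + 1) ω - f i ω) := by
    simp only [T, Finset.sum_apply, Pi.smul_apply, Pi.sub_apply, smul_eq_mul]
  have T_martingale : Martingale T ℱ μ := martingale_sum_range_smul_sub hf _
  have T_memLp (k : ℕ) : MemLp (T k) 2 μ :=
    memLp_finsetSum' _ fun i _ => ((hL2 (i + 1)).sub (hL2 i)).const_smul _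
  have sup_le (ω : Ω) :
      partialSups (fun k ω => |f k ω - f 0 ω| / b k) n ω ≤ 2 * partialSups |T| n ω := by
    simpa only [Pi.partialSups_apply, Pi.abs_apply, T_apply, Real.norm_eq_abs, smul_eq_mul] using
      partialSups_norm_sub_div_le hb hb₀ (fun k => f k ω) n
  have sup_nonneg (ω : Ω) : 0 ≤ partialSups (fun k ω => |f k ω - f 0 ω| / b k) n ω :=
    (div_nonneg (abs_nonneg _) (hb₀.le.trans (hb n.zero_le))).trans
      (le_partialSups (fun k ω => |f k ω - f 0 ω| / b k) n ω)
  calc ∫ ω, partialSups (fun k ω => |f k ω - f 0 ω| / b k) n ω ^ 2 ∂μ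
      ≤ ∫ ω, 4 * partialSups |T| n ω ^ 2 ∂μ := by
        refine integral_mono_of_nonneg (.of_forall fun ω => sq_nonneg _)
          ((memLp_partialSups (fun k => (T_memLp k).abs) n).integrable_sq.const_mul 4)
          (.of_forall fun ω => ?_)
        calc partialSups (fun k ω => |f k ω - f 0 ω| / b k) n ω ^ 2
            ≤ (2 * partialSups |T| n ω) ^ 2 := pow_le_pow_left₀ (sup_nonneg ω) (sup_le ω) 2
          _ = 4 * partialSups |T| n ω ^ 2 := by ring
    _ ≤ 16 * ∫ ω, T n ω ^ 2 ∂μ := by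
        rw [integral_const_mul]
        linarith [integral_partialSups_abs_sq_le_of_martingale T_martingale T_memLp n]
    _ = 16 * ∑ i ∈ Finset.range n, (∫ ω, (f (i + 1) ω - f i ω) ^ 2 ∂μ) / b i ^ 2 := by
        rw [integral_sq_eq_add_sum_of_martingale T_martingale T_memLp]
        simp only [T_apply, Finset.sum_range_zero, zero_pow two_ne_zero, integral_zero, zero_add,
          Finset.sum_range_succ_sub_sum, mul_pow, inv_pow, integral_const_mul, div_eq_inv_mul]

end Martingale

section IndependentSums

variable {Ω : Type*} {m₀ : MeasurableSpace Ω} {μ : Measure Ω}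

theorem martingale_sum_range_of_iIndepFun {E : Type*} [NormedAddCommGroup E] [NormedSpace ℝ E]
    [CompleteSpace E] [SecondCountableTopology E] [MeasurableSpace E] [BorelSpace E]
    {Z : ℕ → Ω → E} (hZ : ∀ i, StronglyMeasurable (Z i)) (hint : ∀ i, Integrable (Z i) μ)
    (hmean : ∀ i, μ[Z i] = 0) (hindep : iIndepFun Z μ) :
    Martingale (fun n ω => ∑ i ∈ Finset.range n, Z i ω)
      (Filtration.natural _ fun n => Finset.stronglyMeasurable_fun_sum (Finset.range n)
        fun i _ => hZ i) μ := by
  have := hindep.isProbabilityMeasure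
  refine martingale_of_condExp_sub_eq_zero_nat (Filtration.stronglyAdapted_natural _)
    (fun n => integrable_finsetSum _ fun i _ => hint i) fun n => ?_
  have past_le : Filtration.natural (fun n ω => ∑ i ∈ Finset.range n, Z i ω) (fun n =>
      Finset.stronglyMeasurable_fun_sum (Finset.range n) fun i _ => hZ i) n
      ≤ ⨆ i ∈ {i | i < n}, MeasurableSpace.comap (Z i) inferInstance := by
    refine iSup₂_le fun k hk => measurable_iff_comap_le.1 ?_
    refine Finset.measurable_fun_sum _ fun i hi => measurable_iff_comap_le.2 ?_
    exact le_iSup₂_of_le i ((Finset.mem_range.1 hi).trans_le hk) le_rfl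
  have indep_past : Indep (MeasurableSpace.comap (Z n) inferInstance)
      (⨆ i ∈ {i | i < n}, MeasurableSpace.comap (Z i) inferInstance) μ := by
    simpa only [iSup_singleton] using indep_iSup_of_disjoint (S := {n}) (T := {i | i < n})
      (fun i => (hZ i).measurable.comap_le) hindep (by simp)
  have incr_eq : ((fun ω => ∑ i ∈ Finset.range (n + 1), Z i ω)
      - fun ω => ∑ i ∈ Finset.range n, Z i ω) = Z n := by
    ext ω
    simp [Finset.sum_range_succ]
  rw [incr_eq]
  refine (condExp_indep_eq (hZ n).measurable.comap_le (Filtration.le _ n)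
    (comap_measurable (Z n)).stronglyMeasurable
    (indep_of_indep_of_le_right indep_past past_le)).trans ?_
  simp only [hmean]
  rfl

end IndependentSums

section GaussianMoments

variable {Ω : Type*} {m₀ : MeasurableSpace Ω} {P : Measure Ω} {X : Ω → ℝ} {m : ℝ} {v : NNReal}

lemma integral_eq_of_hasLaw_gaussianReal (hX : HasLaw X (gaussianReal m v) P) :
    ∫ ω, X ω ∂P = m :=
  hX.integral_eq.trans integral_id_gaussianReal

lemma integral_sq_eq_of_hasLaw_gaussianReal (hX : HasLaw X (gaussianReal m v) P) :
    ∫ ω, X ω ^ 2 ∂P = v + m ^ 2 := by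
  have := hX.isProbabilityMeasure
  have variance_eq : Var[X; P] = v := hX.variance_eq.trans variance_id_gaussianReal
  have variance_eq_sub : Var[X; P] = ∫ ω, X ω ^ 2 ∂P - (∫ ω, X ω ∂P) ^ 2 :=
    variance_eq_sub hX.hasGaussianLaw.memLp_two
  rw [integral_eq_of_hasLaw_gaussianReal hX] at variance_eq_sub
  linarith

end GaussianMoments

theorem stmt_10_general {Ω : Type*} {m₀ : MeasurableSpace Ω} {μ : Measure Ω} [IsFiniteMeasure μ]
    {ℱ : Filtration ℕ m₀} (Z : ℕ → Ω → ℝ)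
    (hS : Martingale (fun k ω => ∑ i ∈ Finset.range k, Z i ω) ℱ μ)
    (hL2 : ∀ i, MemLp (Z i) 2 μ) (hsq : ∀ i, ∫ ω, Z i ω ^ 2 ∂μ ≤ 1) (n : ℕ) (hn : 1 ≤ n) :
    (∫ ω, ((Finset.Icc 1 n).sup' (Finset.nonempty_Icc.mpr hn)
        (fun l => |∑ i ∈ Finset.range l, Z i ω| / (l + 1))) ^ 2 ∂μ)
      ≤ 16 * ∑ i ∈ Finset.Icc 1 n, (1 : ℝ) / (i : ℝ) ^ 2 ∧
    (∫ ω, ((Finset.Icc 1 n).sup' (Finset.nonempty_Icc.mpr hn)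
        (fun l => |∑ i ∈ Finset.range l, Z i ω| / (l + 1))) ^ 2 ∂μ)
      ≤ 8 * Real.pi ^ 2 / 3 := by
  let S : ℕ → Ω → ℝ := fun k ω => ∑ i ∈ Finset.range k, Z i ω
  let R : ℕ → Ω → ℝ := fun k ω => |S k ω - S 0 ω| / ((k : ℝ) + 1)
  have S_memLp (k : ℕ) : MemLp (S k) 2 μ := memLp_finsetSum _ fun i _ => hL2 i
  have R_memLp (k : ℕ) : MemLp (R k) 2 μ :=
    ((S_memLp k).sub (S_memLp 0)).abs.mul_const ((k : ℝ) + 1)⁻¹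
  have R_eq (k : ℕ) (ω : Ω) : R k ω = |∑ i ∈ Finset.range k, Z i ω| / (k + 1) := by
    simp only [R, S, Finset.sum_range_zero, sub_zero]
  have maximal := integral_partialSups_abs_sub_div_sq_le_of_martingale hS S_memLp
    (b := fun k => (k : ℝ) + 1) (Nat.mono_cast.add_const 1) (by norm_num) n
  have bound : (∫ ω, ((Finset.Icc 1 n).sup' (Finset.nonempty_Icc.mpr hn)
      (fun l => |∑ i ∈ Finset.range l, Z i ω| / (l + 1))) ^ 2 ∂μ)
      ≤ 16 * ∑ i ∈ Finset.Icc 1 n, (1 : ℝ) / (i : ℝ) ^ 2 := by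
    calc _ ≤ ∫ ω, partialSups R n ω ^ 2 ∂μ := by
          refine integral_mono_of_nonneg (.of_forall fun ω => sq_nonneg _)
            (memLp_partialSups R_memLp n).integrable_sq (.of_forall fun ω => ?_)
          simp only [← R_eq]
          refine pow_le_pow_left₀ ?_ (Finset.sup'_le _ _ fun l hl => ?_) 2
          · exact (by positivity : 0 ≤ R n ω).trans
              (Finset.le_sup' (R · ω) (Finset.right_mem_Icc.2 hn))
          · exact le_partialSups_of_le R (Finset.mem_Icc.1 hl).2 ω
      _ ≤ 16 * ∑ i ∈ Finset.range n, (∫ ω, (S (i + 1) ω - S i ω) ^ 2 ∂μ) / ((i : ℝ) + 1) ^ 2 :=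
          maximal
      _ ≤ 16 * ∑ i ∈ Finset.range n, 1 / ((i : ℝ) + 1) ^ 2 := by
          gcongr with i
          simpa only [S, Finset.sum_range_succ_sub_sum] using hsq i
      _ = 16 * ∑ i ∈ Finset.Icc 1 n, (1 : ℝ) / (i : ℝ) ^ 2 := by
          rw [← Finset.Ico_add_one_right_eq_Icc, Finset.sum_Ico_eq_sum_range]
          simp [add_comm]
  have sum_le : ∑ i ∈ Finset.Icc 1 n, (1 : ℝ) / (i : ℝ) ^ 2 ≤ Real.pi ^ 2 / 6 :=
    sum_le_hasSum _ (fun i _ => by positivity) hasSum_zeta_two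
  exact ⟨bound, by linarith⟩

/-- Let `Z₁, …, Z_n` (here `Z 0, …, Z (n-1)`) be i.i.d. standard normal
random variables. Then `E[(max_{1≤l≤n} (l+1)⁻¹ |Σ_{i=1}^l Z_i|)²] ≤ 16 Σ_{i=1}^n i⁻²`;
in particular this quantity is at most `8π²/3`. -/
theorem stmt_10 {Ω : Type*} [MeasureSpace Ω] [IsProbabilityMeasure (ℙ : Measure Ω)]
    (Z : ℕ → Ω → ℝ) (hZmeas : ∀ i, Measurable (Z i))
    (hindep : iIndepFun (m := fun _ : ℕ => (inferInstance : MeasurableSpace ℝ)) Z ℙ)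
    (hdist : ∀ i, Measure.map (Z i) ℙ = gaussianReal 0 1)
    (n : ℕ) (hn : 1 ≤ n) :
    (∫ ω, ((Finset.Icc 1 n).sup' (Finset.nonempty_Icc.mpr hn)
        (fun l => |∑ i ∈ Finset.range l, Z i ω| / (l + 1))) ^ 2 ∂ℙ)
      ≤ 16 * ∑ i ∈ Finset.Icc 1 n, (1 : ℝ) / (i : ℝ) ^ 2 ∧
    (∫ ω, ((Finset.Icc 1 n).sup' (Finset.nonempty_Icc.mpr hn)
        (fun l => |∑ i ∈ Finset.range l, Z i ω| / (l + 1))) ^ 2 ∂ℙ)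
      ≤ 8 * Real.pi ^ 2 / 3 := by
  have law (i : ℕ) : HasLaw (Z i) (gaussianReal 0 1) ℙ := ⟨(hZmeas i).aemeasurable, hdist i⟩
  have memLp_two (i : ℕ) : MemLp (Z i) 2 ℙ := (law i).hasGaussianLaw.memLp_two
  exact stmt_10_general Z
    (martingale_sum_range_of_iIndepFun (fun i => (hZmeas i).stronglyMeasurable)
      (fun i => (memLp_two i).integrable one_le_two)
      (fun i => integral_eq_of_hasLaw_gaussianReal (law i)) hindep)
    memLp_two (fun i => by simp [integral_sq_eq_of_hasLaw_gaussianReal (law i)]) n hn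
end

section
/- The function f is twice Fréchet differentiable on C([0,1],ℝ^p) and sup_{w} ‖D²f(w)‖ ≤ 2(q−1)/(ηc), where ‖D²f(w)‖ = sup_{‖h‖=1} |D²f(w)[h,h]| is the norm of the bilinear form D²f(w). -/
open MeasureTheory

set_option maxSynthPendingDepth 3

/-!
Write `⟨v⟩ = √(c² + ‖v‖²)`, `Φ(u) = ∫ ⟨u⟩^q` and `N = Φ^(1/q)`, so that `f(w) = η⁻¹ N(w - s)`. The
first two derivatives of `⟨v⟩^q` are bounded by `q ⟨v⟩^(q-1)` and `q (q-1) ⟨v⟩^(q-2)`, and Jensen's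
inequality gives `∫ ⟨u⟩^a ≤ N^a` for `0 ≤ a ≤ q`; hence `‖DΦ‖ ≤ q N^(q-1)` and
`‖D²Φ‖ ≤ q (q-1) N^(q-2)`. In the chain rule for `Φ^(1/q)` both terms are then at most `(q-1)/N`,
and `N ≥ c`.
-/

section PointwiseApplication

variable {K V W : Type*} [TopologicalSpace K] [CompactSpace K]
  [NormedAddCommGroup V] [NormedSpace ℝ V] [NormedAddCommGroup W] [NormedSpace ℝ W]

/-- Pointwise application of an operator-valued function to a vector-valued one, as a bounded
bilinear map `(A, h) ↦ (t ↦ A t (h t))`. -/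
noncomputable def pointwiseApplyL : C(K, V →L[ℝ] W) →L[ℝ] C(K, V) →L[ℝ] C(K, W) :=
  LinearMap.mkContinuous₂
    (LinearMap.mk₂ ℝ (fun A h => ⟨fun t => A t (h t), by fun_prop⟩)
      (fun _ _ _ => by ext; simp) (fun _ _ _ => by ext; simp)
      (fun _ _ _ => by ext; simp) (fun _ _ _ => by ext; simp))
    1 fun A h => by
      rw [one_mul, ContinuousMap.norm_le _ (by positivity)]
      exact fun t => (A t).le_of_opNorm_le_of_le (A.norm_coe_le_norm t) (h.norm_coe_le_norm t)

theorem hasFDerivAt_postcomp {φ : C(V, W)} {φ' : C(V, V →L[ℝ] W)}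
    (hφ : ∀ v, HasFDerivAt φ (φ' v) v) (u : C(K, V)) :
    HasFDerivAt (fun u : C(K, V) => φ.comp u) (pointwiseApplyL (φ'.comp u)) u := by
  rw [hasFDerivAt_iff_isLittleO, Asymptotics.isLittleO_iff]
  intro ε hε
  -- Post-composition with `φ'` is continuous for the sup norm; this makes the estimate uniform.
  obtain ⟨δ, hδ, hclose⟩ :=
    Metric.continuous_iff.1 (ContinuousMap.continuous_postcomp (X := K) φ') u ε hε
  filter_upwards [Metric.ball_mem_nhds u hδ] with w hw
  rw [ContinuousMap.norm_le _ (by positivity)]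
  intro t
  have hderiv : ∀ x ∈ segment ℝ (u t) (w t), ‖φ' x - φ' (u t)‖ ≤ ε := by
    rw [segment_eq_image']
    rintro _ ⟨θ, ⟨hθ₀, hθ₁⟩, rfl⟩
    have hdist : dist (u + θ • (w - u)) u < δ := by
      rw [dist_eq_norm, add_sub_cancel_left, norm_smul, Real.norm_of_nonneg hθ₀]
      exact (mul_le_of_le_one_left (norm_nonneg _) hθ₁).trans_lt (mem_ball_iff_norm.1 hw)
    rw [← dist_eq_norm]
    exact (ContinuousMap.dist_apply_le_dist t).trans (hclose _ hdist).le
  calc ‖φ (w t) - φ (u t) - φ' (u t) (w t - u t)‖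
      ≤ ε * ‖w t - u t‖ :=
        (convex_segment (u t) (w t)).norm_image_sub_le_of_norm_hasFDerivWithin_le'
          (fun x _ => (hφ x).hasFDerivWithinAt) hderiv
          (left_mem_segment ℝ _ _) (right_mem_segment ℝ _ _)
    _ ≤ ε * ‖w - u‖ := by
        gcongr
        exact (w - u).norm_coe_le_norm t

end PointwiseApplication

section IntegralFunctional

variable {K V W : Type*} [TopologicalSpace K] [CompactSpace K]
  [MeasurableSpace K] [OpensMeasurableSpace K] (μ : Measure K) [IsFiniteMeasure μ]
  [NormedAddCommGroup V] [NormedSpace ℝ V] [NormedAddCommGroup W]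

theorem integrable_of_continuous_of_compactSpace {g : K → W} (hg : Continuous g) :
    Integrable g μ :=
  hg.integrable_of_hasCompactSupport (.of_compactSpace g)

variable [NormedSpace ℝ W]

/-- The Bochner integral, as a bounded linear map on continuous functions. -/
noncomputable def integralL : C(K, W) →L[ℝ] W :=
  LinearMap.mkContinuous
    { toFun := fun g => ∫ t, g t ∂μ
      map_add' := fun g₁ g₂ =>
        integral_add (integrable_of_continuous_of_compactSpace μ g₁.continuous)
          (integrable_of_continuous_of_compactSpace μ g₂.continuous)
      map_smul' := fun r g => integral_smul r g }
    (μ.real Set.univ) fun g => by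
      rw [mul_comm]
      exact norm_integral_le_of_norm_le_const (.of_forall g.norm_coe_le_norm)

/-- The bounded linear map sending an operator-valued function `A` to `h ↦ ∫ t, A t (h t) ∂μ`.
The derivatives of an integral functional are of this form. -/
noncomputable def integralApplyL : C(K, V →L[ℝ] W) →L[ℝ] C(K, V) →L[ℝ] W :=
  (ContinuousLinearMap.compL ℝ C(K, V) C(K, W) W (integralL μ)).comp pointwiseApplyL

@[simp]
theorem integralApplyL_apply (A : C(K, V →L[ℝ] W)) (h : C(K, V)) :
    integralApplyL μ A h = ∫ t, A t (h t) ∂μ := rfl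

theorem norm_integralApplyL_apply_le (A : C(K, V →L[ℝ] W)) :
    ‖integralApplyL μ A‖ ≤ ∫ t, ‖A t‖ ∂μ := by
  refine ContinuousLinearMap.opNorm_le_bound _ (by positivity) fun h => ?_
  rw [integralApplyL_apply, ← integral_mul_const]
  refine norm_integral_le_of_norm_le
    (integrable_of_continuous_of_compactSpace μ (by fun_prop)) (.of_forall fun t => ?_)
  exact (A t).le_opNorm_of_le (h.norm_coe_le_norm t)

theorem norm_integralApplyL_comp_pointwiseApplyL_le {U : Type*} [NormedAddCommGroup U]
    [NormedSpace ℝ U] (B : C(K, U →L[ℝ] V →L[ℝ] W)) :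
    ‖(integralApplyL μ (V := V) (W := W)).comp (pointwiseApplyL B)‖ ≤ ∫ t, ‖B t‖ ∂μ := by
  refine ContinuousLinearMap.opNorm_le_bound _ (by positivity) fun h => ?_
  calc ‖integralApplyL μ (pointwiseApplyL B h)‖
      ≤ ∫ t, ‖B t (h t)‖ ∂μ := norm_integralApplyL_apply_le μ _
    _ ≤ ∫ t, ‖B t‖ * ‖h‖ ∂μ :=
        integral_mono (integrable_of_continuous_of_compactSpace μ (by fun_prop))
          (integrable_of_continuous_of_compactSpace μ (by fun_prop))
          fun t => (B t).le_opNorm_of_le (h.norm_coe_le_norm t)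
    _ = (∫ t, ‖B t‖ ∂μ) * ‖h‖ := integral_mul_const _ _

theorem hasFDerivAt_integral_comp {φ : V → W} {φ' : C(V, V →L[ℝ] W)}
    (hφ : ∀ v, HasFDerivAt φ (φ' v) v) (u : C(K, V)) :
    HasFDerivAt (fun u : C(K, V) => ∫ t, φ (u t) ∂μ) (integralApplyL μ (φ'.comp u)) u := by
  have hcont : Continuous φ := continuous_iff_continuousAt.2 fun v => (hφ v).continuousAt
  exact (integralL μ).hasFDerivAt.comp u (hasFDerivAt_postcomp (φ := ⟨φ, hcont⟩) hφ u)

theorem hasFDerivAt_integralApplyL_comp {U : Type*} [NormedAddCommGroup U] [NormedSpace ℝ U]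
    {ψ : C(U, V →L[ℝ] W)} {ψ' : C(U, U →L[ℝ] V →L[ℝ] W)}
    (hψ : ∀ v, HasFDerivAt ψ (ψ' v) v) (u : C(K, U)) :
    HasFDerivAt (fun u : C(K, U) => integralApplyL μ (ψ.comp u))
      ((integralApplyL μ).comp (pointwiseApplyL (ψ'.comp u))) u := by
  have h := (integralApplyL (K := K) (V := V) (W := W) μ).hasFDerivAt (x := ψ.comp u)
  exact h.comp u (hasFDerivAt_postcomp hψ u)

end IntegralFunctional

section RpowComposition

variable {E : Type*} [NormedAddCommGroup E] [NormedSpace ℝ E] {Φ : E → ℝ}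

theorem hasFDerivAt_fderiv_rpow_const (hΦ : Differentiable ℝ Φ)
    (hΦ' : Differentiable ℝ (fderiv ℝ Φ)) (hne : ∀ x, Φ x ≠ 0) (r : ℝ) (x : E) :
    HasFDerivAt (fderiv ℝ fun y => Φ y ^ r)
      ((r * Φ x ^ (r - 1)) • fderiv ℝ (fderiv ℝ Φ) x +
        (r * (r - 1) * Φ x ^ (r - 2)) • (fderiv ℝ Φ x).smulRight (fderiv ℝ Φ x)) x := by
  have hfderiv : (fderiv ℝ fun y => Φ y ^ r) = fun y => (r * Φ y ^ (r - 1)) • fderiv ℝ Φ y :=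
    funext fun y => ((hΦ y).hasFDerivAt.rpow_const (.inl (hne y))).fderiv
  have hcoeff : HasFDerivAt (fun y => r * Φ y ^ (r - 1))
      ((r * (r - 1) * Φ x ^ (r - 2)) • fderiv ℝ Φ x) x := by
    refine (((hΦ x).hasFDerivAt.rpow_const (p := r - 1) (.inl (hne x))).const_mul r).congr_fderiv ?_
    rw [smul_smul, ← mul_assoc, sub_sub, one_add_one_eq_two]
  rw [hfderiv]
  refine (hcoeff.smul (hΦ' x).hasFDerivAt).congr_fderiv ?_
  ext h k
  simp [mul_assoc]

theorem norm_fderiv_fderiv_rpow_const_le (hΦ : Differentiable ℝ Φ)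
    (hΦ' : Differentiable ℝ (fderiv ℝ Φ)) (hpos : ∀ x, 0 < Φ x) (r : ℝ) (x : E) :
    ‖fderiv ℝ (fderiv ℝ fun y => Φ y ^ r) x‖ ≤
      |r| * Φ x ^ (r - 1) * ‖fderiv ℝ (fderiv ℝ Φ) x‖ +
        |r * (r - 1)| * Φ x ^ (r - 2) * ‖fderiv ℝ Φ x‖ ^ 2 := by
  rw [(hasFDerivAt_fderiv_rpow_const hΦ hΦ' (fun y => (hpos y).ne') r x).fderiv]
  refine (norm_add_le _ _).trans_eq ?_
  rw [norm_smul, norm_smul, ContinuousLinearMap.norm_smulRight_apply, Real.norm_eq_abs,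
    Real.norm_eq_abs, abs_mul r, abs_mul (r * _), abs_of_pos (Real.rpow_pos_of_pos (hpos x) _),
    abs_of_pos (Real.rpow_pos_of_pos (hpos x) _), sq]

theorem rpow_rpow_one_div_sub {x q : ℝ} (hx : 0 < x) (hq : q ≠ 0) (a : ℝ) :
    (x ^ q) ^ (1 / q - a) = x ^ (1 - a * q) := by
  rw [← Real.rpow_mul hx.le, mul_sub, mul_one_div_cancel hq, mul_comm q]

theorem norm_fderiv_fderiv_rpow_one_div_le (hΦ : Differentiable ℝ Φ)
    (hΦ' : Differentiable ℝ (fderiv ℝ Φ)) (hpos : ∀ x, 0 < Φ x) {x : E} {N q : ℝ} (hN : 0 < N)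
    (hΦN : Φ x = N ^ q) (hq : 1 ≤ q) (hD : ‖fderiv ℝ Φ x‖ ≤ q * N ^ (q - 1))
    (hD₂ : ‖fderiv ℝ (fderiv ℝ Φ) x‖ ≤ q * (q - 1) * N ^ (q - 2)) :
    ‖fderiv ℝ (fderiv ℝ fun y => Φ y ^ (1 / q)) x‖ ≤ 2 * (q - 1) / N := by
  have hq₀ : 0 < q := by linarith
  have habs₁ : |1 / q| = 1 / q := abs_of_pos (by positivity)
  have habs₂ : |1 / q * (1 / q - 1)| = (q - 1) / q ^ 2 := by
    rw [abs_mul, habs₁, abs_of_nonpos (sub_nonpos.2 ((div_le_one hq₀).2 hq))]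
    field_simp
    ring
  have hpow₁ : N ^ (1 - 1 * q) * N ^ (q - 2) = N⁻¹ := by
    rw [← Real.rpow_add hN, ← Real.rpow_neg_one]
    ring_nf
  have hpow₂ : N ^ (1 - 2 * q) * (N ^ (q - 1)) ^ 2 = N⁻¹ := by
    rw [← Real.rpow_mul_natCast hN.le, ← Real.rpow_add hN, ← Real.rpow_neg_one]
    push_cast
    ring_nf
  have hchain := norm_fderiv_fderiv_rpow_const_le hΦ hΦ' hpos (1 / q) x
  rw [hΦN, rpow_rpow_one_div_sub hN hq₀.ne', rpow_rpow_one_div_sub hN hq₀.ne', habs₁, habs₂]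
    at hchain
  calc ‖fderiv ℝ (fderiv ℝ fun y => Φ y ^ (1 / q)) x‖
      ≤ 1 / q * N ^ (1 - 1 * q) * (q * (q - 1) * N ^ (q - 2)) +
          (q - 1) / q ^ 2 * N ^ (1 - 2 * q) * (q * N ^ (q - 1)) ^ 2 :=
        hchain.trans (by gcongr)
    _ = (q - 1) * (N ^ (1 - 1 * q) * N ^ (q - 2)) +
          (q - 1) * (N ^ (1 - 2 * q) * (N ^ (q - 1)) ^ 2) := by
        field_simp
    _ = 2 * (q - 1) / N := by
        rw [hpow₁, hpow₂]
        ring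

end RpowComposition

section Jensen

variable {Ω : Type*} [MeasurableSpace Ω] {μ : Measure Ω} {X : Ω → ℝ} {r : ℝ}

theorem integrable_rpow_const_of_le_one [IsFiniteMeasure μ] (hX : 0 ≤ᵐ[μ] X)
    (hint : Integrable X μ) (hr₀ : 0 ≤ r) (hr₁ : r ≤ 1) : Integrable (fun ω => X ω ^ r) μ := by
  refine Integrable.mono' (g := fun ω => 1 + r * (X ω - 1)) (by fun_prop)
    (hint.aemeasurable.pow_const r).aestronglyMeasurable ?_
  filter_upwards [hX] with ω hω
  rw [Real.norm_of_nonneg (Real.rpow_nonneg hω r)]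
  have hbernoulli := rpow_one_add_le_one_add_mul_self (s := X ω - 1) (by simpa using hω) hr₀ hr₁
  rwa [add_sub_cancel] at hbernoulli

theorem integral_rpow_le_rpow_integral [IsProbabilityMeasure μ] (hX : 0 ≤ᵐ[μ] X)
    (hint : Integrable X μ) (hr₀ : 0 ≤ r) (hr₁ : r ≤ 1) :
    ∫ ω, X ω ^ r ∂μ ≤ (∫ ω, X ω ∂μ) ^ r :=
  (Real.concaveOn_rpow hr₀ hr₁).le_map_integral
    (continuousOn_id.rpow_const fun _ _ => .inr hr₀) isClosed_Ici hX hint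
    (integrable_rpow_const_of_le_one hX hint hr₀ hr₁)

end Jensen

section RegNorm

variable {V : Type*} [NormedAddCommGroup V]

/-- The regularized norm `√(c² + ‖v‖²)`: the norm of `(c, v)` in the Hilbert sum `ℝ ⊕ V`, which for
`c ≠ 0` is a smooth function of `v` in an inner product space. -/
noncomputable def regNorm (c : ℝ) (v : V) : ℝ := √(c ^ 2 + ‖v‖ ^ 2)

theorem le_regNorm (c : ℝ) (v : V) : c ≤ regNorm c v :=
  Real.le_sqrt_of_sq_le (le_add_of_nonneg_right (sq_nonneg _))

theorem norm_le_regNorm (c : ℝ) (v : V) : ‖v‖ ≤ regNorm c v :=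
  Real.le_sqrt_of_sq_le (le_add_of_nonneg_left (sq_nonneg _))

variable {c : ℝ}

theorem regNorm_pos (hc : c ≠ 0) (v : V) : 0 < regNorm c v :=
  Real.sqrt_pos.2 (by positivity)

theorem regNorm_rpow_mul_self (hc : c ≠ 0) (r : ℝ) (v : V) :
    regNorm c v ^ (r - 1) * regNorm c v = regNorm c v ^ r := by
  rw [← Real.rpow_add_one (regNorm_pos hc v).ne', sub_add_cancel]

theorem continuous_regNorm_rpow (hc : c ≠ 0) (r : ℝ) : Continuous fun v : V => regNorm c v ^ r :=
  Continuous.rpow_const (by unfold regNorm; fun_prop) fun v => .inl (regNorm_pos hc v).ne'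

end RegNorm

section RealInner

variable {V : Type*} [NormedAddCommGroup V] [InnerProductSpace ℝ V]

/-- The inner product of a real inner product space as a bounded bilinear map, that is, `innerSL ℝ`
with its conjugate-linearity in the first variable read as linearity. -/
noncomputable def realInnerL : V →L[ℝ] V →L[ℝ] ℝ := innerSL ℝ

@[simp]
theorem realInnerL_apply_apply (v w : V) : realInnerL v w = inner ℝ v w := rfl

theorem norm_realInnerL_apply (v : V) : ‖realInnerL v‖ = ‖v‖ := innerSL_apply_norm ℝ v

theorem norm_realInnerL_le : ‖(realInnerL : V →L[ℝ] V →L[ℝ] ℝ)‖ ≤ 1 := norm_innerSL_le ℝ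

end RealInner

section RegNormDerivatives

variable {V : Type*} [NormedAddCommGroup V] [InnerProductSpace ℝ V] {c : ℝ}

theorem hasFDerivAt_regNorm_rpow (hc : c ≠ 0) (r : ℝ) (v : V) :
    HasFDerivAt (fun v => regNorm c v ^ r) ((r * regNorm c v ^ (r - 2)) • realInnerL v) v := by
  have hpos : 0 < c ^ 2 + ‖v‖ ^ 2 := by positivity
  have hsq := ((hasStrictFDerivAt_norm_sq v).hasFDerivAt.const_add (c ^ 2)).rpow_const
    (p := r / 2) (.inl hpos.ne')
  have hfun : (fun v : V => regNorm c v ^ r) = fun v => (c ^ 2 + ‖v‖ ^ 2) ^ (r / 2) :=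
    funext fun v => (Real.rpow_div_two_eq_sqrt r (by positivity)).symm
  rw [hfun, regNorm, ← Real.rpow_div_two_eq_sqrt _ hpos.le]
  refine hsq.congr_fderiv ?_
  ext h
  simp only [smul_apply, nsmul_eq_mul, smul_eq_mul, innerSL_apply_apply, realInnerL_apply_apply]
  ring_nf

/-- The derivative `v ↦ r ⟨v⟩ʳ⁻² ⟪v, ·⟫` of `⟨v⟩ʳ`, where `⟨v⟩ = regNorm c v`. -/
noncomputable def regNormRpowFDeriv (hc : c ≠ 0) (r : ℝ) : C(V, V →L[ℝ] ℝ) where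
  toFun v := (r * regNorm c v ^ (r - 2)) • realInnerL v
  continuous_toFun := by
    have := continuous_regNorm_rpow (V := V) hc (r - 2)
    fun_prop

/-- The second derivative `v ↦ r ⟨v⟩ʳ⁻² ⟪·, ·⟫ + r (r - 2) ⟨v⟩ʳ⁻⁴ ⟪v, ·⟫ ⟪v, ·⟫` of `⟨v⟩ʳ`, where
`⟨v⟩ = regNorm c v`. -/
noncomputable def regNormRpowFDeriv₂ (hc : c ≠ 0) (r : ℝ) : C(V, V →L[ℝ] V →L[ℝ] ℝ) where
  toFun v := (r * regNorm c v ^ (r - 2)) • (realInnerL : V →L[ℝ] V →L[ℝ] ℝ) +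
    (r * (r - 2) * regNorm c v ^ (r - 4)) • (realInnerL v).smulRight (realInnerL v)
  continuous_toFun := by
    have h₂ := continuous_regNorm_rpow (V := V) hc (r - 2)
    have h₄ := continuous_regNorm_rpow (V := V) hc (r - 4)
    have hsmulRight : Continuous fun v : V => (realInnerL v).smulRight (realInnerL v) :=
      ((ContinuousLinearMap.smulRightL ℝ V (V →L[ℝ] ℝ)).continuous.comp
        realInnerL.continuous).clm_apply realInnerL.continuous
    fun_prop

theorem hasFDerivAt_regNormRpowFDeriv (hc : c ≠ 0) (r : ℝ) (v : V) :
    HasFDerivAt (regNormRpowFDeriv hc r) (regNormRpowFDeriv₂ hc r v) v := by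
  refine (((hasFDerivAt_regNorm_rpow hc (r - 2) v).const_mul r).smul
    realInnerL.hasFDerivAt).congr_fderiv ?_
  ext h k
  have hexp : r - 2 - 2 = r - 4 := by ring
  simp [regNormRpowFDeriv₂, hexp, mul_assoc]

theorem norm_regNormRpowFDeriv_le (hc : c ≠ 0) (r : ℝ) (v : V) :
    ‖regNormRpowFDeriv hc r v‖ ≤ |r| * regNorm c v ^ (r - 1) := by
  have hpow := Real.rpow_pos_of_pos (regNorm_pos hc v) (r - 2)
  calc ‖(r * regNorm c v ^ (r - 2)) • realInnerL v‖
      = |r| * (regNorm c v ^ (r - 2) * ‖v‖) := by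
        rw [norm_smul, norm_realInnerL_apply, Real.norm_eq_abs, abs_mul, abs_of_pos hpow, mul_assoc]
    _ ≤ |r| * (regNorm c v ^ (r - 2) * regNorm c v) := by
        gcongr
        exact norm_le_regNorm c v
    _ = |r| * regNorm c v ^ (r - 1) := by
        rw [← regNorm_rpow_mul_self hc (r - 1), sub_sub, one_add_one_eq_two]

theorem norm_regNormRpowFDeriv₂_le (hc : c ≠ 0) {r : ℝ} (hr : 2 ≤ r) (v : V) :
    ‖regNormRpowFDeriv₂ hc r v‖ ≤ r * (r - 1) * regNorm c v ^ (r - 2) := by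
  have hpow₂ := Real.rpow_pos_of_pos (regNorm_pos hc v) (r - 2)
  have hpow₄ := Real.rpow_pos_of_pos (regNorm_pos hc v) (r - 4)
  have hnormalize : regNorm c v ^ (r - 4) * regNorm c v ^ 2 = regNorm c v ^ (r - 2) := by
    rw [← Real.rpow_add_natCast (regNorm_pos hc v).ne']
    ring_nf
  have hmain : ‖(r * regNorm c v ^ (r - 2)) • (realInnerL : V →L[ℝ] V →L[ℝ] ℝ)‖ ≤
      r * regNorm c v ^ (r - 2) := by
    rw [norm_smul, Real.norm_of_nonneg (by positivity)]
    exact mul_le_of_le_one_right (by positivity) norm_realInnerL_le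
  have hrankOne :
      ‖(r * (r - 2) * regNorm c v ^ (r - 4)) • (realInnerL v).smulRight (realInnerL v)‖ ≤
        r * (r - 2) * regNorm c v ^ (r - 2) := by
    rw [norm_smul, Real.norm_of_nonneg (by positivity), ContinuousLinearMap.norm_smulRight_apply,
      norm_realInnerL_apply, ← sq, mul_assoc, ← hnormalize]
    gcongr
    exact norm_le_regNorm c v
  calc ‖regNormRpowFDeriv₂ hc r v‖
      ≤ r * regNorm c v ^ (r - 2) + r * (r - 2) * regNorm c v ^ (r - 2) :=
        norm_add_le_of_le hmain hrankOne
    _ = r * (r - 1) * regNorm c v ^ (r - 2) := by ring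

end RegNormDerivatives

section RegLpNorm

variable {K V : Type*} [TopologicalSpace K] [MeasurableSpace K] (μ : Measure K)
  [NormedAddCommGroup V]

/-- The regularized `L^q` norm `(∫ t, (c² + ‖u t‖²)^(q/2) ∂μ)^(1/q)` of a continuous function
`u`. -/
noncomputable def regLpNorm (c q : ℝ) (u : C(K, V)) : ℝ :=
  (∫ t, regNorm c (u t) ^ q ∂μ) ^ (1 / q)

variable [CompactSpace K] [OpensMeasurableSpace K] {c q : ℝ}

theorem integrable_regNorm_rpow [IsFiniteMeasure μ] (hc : c ≠ 0) (q : ℝ) (u : C(K, V)) :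
    Integrable (fun t => regNorm c (u t) ^ q) μ :=
  integrable_of_continuous_of_compactSpace μ ((continuous_regNorm_rpow hc q).comp u.continuous)

section NonzeroFiniteMeasure

variable [IsFiniteMeasure μ] [NeZero μ]

theorem integral_regNorm_rpow_pos (hc : c ≠ 0) (q : ℝ) (u : C(K, V)) :
    0 < ∫ t, regNorm c (u t) ^ q ∂μ := by
  have hpos : ∀ t, 0 < regNorm c (u t) ^ q := fun t => Real.rpow_pos_of_pos (regNorm_pos hc _) q
  rw [integral_pos_iff_support_of_nonneg (fun t => (hpos t).le) (integrable_regNorm_rpow μ hc q u),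
    Function.support_eq_univ fun t => (hpos t).ne', Measure.measure_univ_pos]
  exact NeZero.ne μ

theorem regLpNorm_pos (hc : c ≠ 0) (u : C(K, V)) : 0 < regLpNorm μ c q u :=
  Real.rpow_pos_of_pos (integral_regNorm_rpow_pos μ hc q u) _

theorem integral_regNorm_rpow_eq (hc : c ≠ 0) (hq : q ≠ 0) (u : C(K, V)) :
    ∫ t, regNorm c (u t) ^ q ∂μ = regLpNorm μ c q u ^ q := by
  rw [regLpNorm, ← Real.rpow_mul (integral_regNorm_rpow_pos μ hc q u).le,
    one_div_mul_cancel hq, Real.rpow_one]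

end NonzeroFiniteMeasure

variable [IsProbabilityMeasure μ]

theorem integral_regNorm_rpow_le (hc : c ≠ 0) (hq : 0 < q) {a : ℝ} (ha : 0 ≤ a) (haq : a ≤ q)
    (u : C(K, V)) : ∫ t, regNorm c (u t) ^ a ∂μ ≤ regLpNorm μ c q u ^ a := by
  have hpow (x : ℝ) (hx : 0 < x) : (x ^ q) ^ (a / q) = x ^ a := by
    rw [← Real.rpow_mul hx.le, mul_div_cancel₀ a hq.ne']
  calc ∫ t, regNorm c (u t) ^ a ∂μ
      = ∫ t, (regNorm c (u t) ^ q) ^ (a / q) ∂μ := by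
        simp only [hpow _ (regNorm_pos hc _)]
    _ ≤ (∫ t, regNorm c (u t) ^ q ∂μ) ^ (a / q) :=
        integral_rpow_le_rpow_integral
          (.of_forall fun t => Real.rpow_nonneg (regNorm_pos hc (u t)).le q)
          (integrable_regNorm_rpow μ hc q u) (div_nonneg ha hq.le) ((div_le_one hq).2 haq)
    _ = regLpNorm μ c q u ^ a := by
        rw [integral_regNorm_rpow_eq μ hc hq.ne', hpow _ (regLpNorm_pos μ hc u)]

theorem le_regLpNorm (hc : c ≠ 0) (hq : 1 ≤ q) (u : C(K, V)) : c ≤ regLpNorm μ c q u := by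
  calc c = ∫ _, c ∂μ := by simp
    _ ≤ ∫ t, regNorm c (u t) ^ (1 : ℝ) ∂μ :=
        integral_mono (integrable_const c) (integrable_regNorm_rpow μ hc 1 u)
          fun t => (le_regNorm c (u t)).trans_eq (Real.rpow_one _).symm
    _ ≤ regLpNorm μ c q u ^ (1 : ℝ) :=
        integral_regNorm_rpow_le μ hc (by linarith) zero_le_one hq u
    _ = regLpNorm μ c q u := Real.rpow_one _

end RegLpNorm

section RegLpNormDerivatives

variable {K V : Type*} [TopologicalSpace K] [CompactSpace K]
  [MeasurableSpace K] [OpensMeasurableSpace K] (μ : Measure K)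
  [NormedAddCommGroup V] [InnerProductSpace ℝ V] {c : ℝ}

section FiniteMeasure

variable [IsFiniteMeasure μ]

theorem hasFDerivAt_integral_regNorm_rpow (hc : c ≠ 0) (q : ℝ) (u : C(K, V)) :
    HasFDerivAt (fun u : C(K, V) => ∫ t, regNorm c (u t) ^ q ∂μ)
      (integralApplyL μ ((regNormRpowFDeriv hc q).comp u)) u :=
  hasFDerivAt_integral_comp μ (φ' := regNormRpowFDeriv hc q) (hasFDerivAt_regNorm_rpow hc q) u

theorem differentiable_integral_regNorm_rpow (hc : c ≠ 0) (q : ℝ) :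
    Differentiable ℝ fun u : C(K, V) => ∫ t, regNorm c (u t) ^ q ∂μ :=
  fun u => (hasFDerivAt_integral_regNorm_rpow μ hc q u).differentiableAt

theorem hasFDerivAt_fderiv_integral_regNorm_rpow (hc : c ≠ 0) (q : ℝ) (u : C(K, V)) :
    HasFDerivAt (fderiv ℝ fun u : C(K, V) => ∫ t, regNorm c (u t) ^ q ∂μ)
      ((integralApplyL (V := V) (W := ℝ) μ).comp
        (pointwiseApplyL ((regNormRpowFDeriv₂ hc q).comp u))) u := by
  rw [show fderiv ℝ _ = _ from funext fun w => (hasFDerivAt_integral_regNorm_rpow μ hc q w).fderiv]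
  exact hasFDerivAt_integralApplyL_comp μ (hasFDerivAt_regNormRpowFDeriv hc q) u

theorem differentiable_fderiv_integral_regNorm_rpow (hc : c ≠ 0) (q : ℝ) :
    Differentiable ℝ (fderiv ℝ fun u : C(K, V) => ∫ t, regNorm c (u t) ^ q ∂μ) :=
  fun u => (hasFDerivAt_fderiv_integral_regNorm_rpow μ hc q u).differentiableAt

theorem differentiable_regLpNorm [NeZero μ] (hc : c ≠ 0) (q : ℝ) :
    Differentiable ℝ (regLpNorm (V := V) μ c q) :=
  (differentiable_integral_regNorm_rpow μ hc q).rpow_const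
    fun u => .inl (integral_regNorm_rpow_pos μ hc q u).ne'

theorem differentiable_fderiv_regLpNorm [NeZero μ] (hc : c ≠ 0) (q : ℝ) :
    Differentiable ℝ (fderiv ℝ (regLpNorm (V := V) μ c q)) := fun u =>
  (hasFDerivAt_fderiv_rpow_const (differentiable_integral_regNorm_rpow μ hc q)
    (differentiable_fderiv_integral_regNorm_rpow μ hc q)
    (fun w => (integral_regNorm_rpow_pos μ hc q w).ne') (1 / q) u).differentiableAt

end FiniteMeasure

variable [IsProbabilityMeasure μ] {q : ℝ}

theorem norm_fderiv_integral_regNorm_rpow_le (hc : c ≠ 0) (hq : 1 ≤ q) (u : C(K, V)) :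
    ‖fderiv ℝ (fun u : C(K, V) => ∫ t, regNorm c (u t) ^ q ∂μ) u‖ ≤
      q * regLpNorm μ c q u ^ (q - 1) := by
  rw [(hasFDerivAt_integral_regNorm_rpow μ hc q u).fderiv]
  calc ‖integralApplyL μ ((regNormRpowFDeriv hc q).comp u)‖
      ≤ ∫ t, ‖regNormRpowFDeriv hc q (u t)‖ ∂μ := norm_integralApplyL_apply_le μ _
    _ ≤ ∫ t, |q| * regNorm c (u t) ^ (q - 1) ∂μ :=
        integral_mono (integrable_of_continuous_of_compactSpace μ (by fun_prop))
          ((integrable_regNorm_rpow μ hc _ u).const_mul _)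
          fun t => norm_regNormRpowFDeriv_le hc q (u t)
    _ = q * ∫ t, regNorm c (u t) ^ (q - 1) ∂μ := by
        rw [integral_const_mul, abs_of_nonneg (by linarith)]
    _ ≤ q * regLpNorm μ c q u ^ (q - 1) := by
        gcongr
        exact integral_regNorm_rpow_le μ hc (by linarith) (by linarith) (by linarith) u

theorem norm_fderiv_fderiv_integral_regNorm_rpow_le (hc : c ≠ 0) (hq : 2 ≤ q) (u : C(K, V)) :
    ‖fderiv ℝ (fderiv ℝ fun u : C(K, V) => ∫ t, regNorm c (u t) ^ q ∂μ) u‖ ≤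
      q * (q - 1) * regLpNorm μ c q u ^ (q - 2) := by
  have hcoeff : 0 ≤ q * (q - 1) := mul_nonneg (by linarith) (by linarith)
  rw [(hasFDerivAt_fderiv_integral_regNorm_rpow μ hc q u).fderiv]
  calc ‖(integralApplyL (V := V) (W := ℝ) μ).comp
        (pointwiseApplyL ((regNormRpowFDeriv₂ hc q).comp u))‖
      ≤ ∫ t, ‖regNormRpowFDeriv₂ hc q (u t)‖ ∂μ :=
        norm_integralApplyL_comp_pointwiseApplyL_le μ _
    _ ≤ ∫ t, q * (q - 1) * regNorm c (u t) ^ (q - 2) ∂μ :=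
        integral_mono (integrable_of_continuous_of_compactSpace μ (by fun_prop))
          ((integrable_regNorm_rpow μ hc _ u).const_mul _)
          fun t => norm_regNormRpowFDeriv₂_le hc hq (u t)
    _ = q * (q - 1) * ∫ t, regNorm c (u t) ^ (q - 2) ∂μ := integral_const_mul _ _
    _ ≤ q * (q - 1) * regLpNorm μ c q u ^ (q - 2) := by
        gcongr
        exact integral_regNorm_rpow_le μ hc (by linarith) (by linarith) (by linarith) u

theorem norm_fderiv_fderiv_regLpNorm_le_div_regLpNorm (hc : c ≠ 0) (hq : 2 ≤ q) (u : C(K, V)) :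
    ‖fderiv ℝ (fderiv ℝ (regLpNorm μ c q)) u‖ ≤ 2 * (q - 1) / regLpNorm μ c q u :=
  norm_fderiv_fderiv_rpow_one_div_le (differentiable_integral_regNorm_rpow μ hc q)
    (differentiable_fderiv_integral_regNorm_rpow μ hc q) (integral_regNorm_rpow_pos μ hc q)
    (regLpNorm_pos μ hc u) (integral_regNorm_rpow_eq μ hc (by linarith) u) (by linarith)
    (norm_fderiv_integral_regNorm_rpow_le μ hc (by linarith) u)
    (norm_fderiv_fderiv_integral_regNorm_rpow_le μ hc hq u)

theorem norm_fderiv_fderiv_regLpNorm_le (hc : 0 < c) (hq : 2 ≤ q) (u : C(K, V)) :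
    ‖fderiv ℝ (fderiv ℝ (regLpNorm μ c q)) u‖ ≤ 2 * (q - 1) / c := by
  refine (norm_fderiv_fderiv_regLpNorm_le_div_regLpNorm μ hc.ne' hq u).trans ?_
  gcongr
  · linarith
  · exact le_regLpNorm μ hc.ne' (by linarith) u

end RegLpNormDerivatives

section Affine

variable {E F : Type*} [NormedAddCommGroup E] [NormedSpace ℝ E] [NormedAddCommGroup F]
  [NormedSpace ℝ F] {g : E → F}

theorem hasFDerivAt_const_smul_comp_sub (hg : Differentiable ℝ g) (a : ℝ) (s w : E) :
    HasFDerivAt (fun w => a • g (w - s)) (a • fderiv ℝ g (w - s)) w :=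
  ((hasFDerivAt_comp_sub s).2 (hg (w - s)).hasFDerivAt).const_smul a

end Affine

theorem stmt_16_general {K V : Type*} [TopologicalSpace K] [CompactSpace K] [MeasurableSpace K]
    [OpensMeasurableSpace K] (μ : Measure K) [IsProbabilityMeasure μ]
    [NormedAddCommGroup V] [InnerProductSpace ℝ V] (s : C(K, V))
    (c η q : ℝ) (hc : 0 < c) (hη : 0 < η) (hq : 2 ≤ q) (f : C(K, V) → ℝ)
    (hf : ∀ w, f w = η⁻¹ * (∫ t, (c ^ 2 + ‖w t - s t‖ ^ 2) ^ (q / 2) ∂μ) ^ (1 / q)) :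
    Differentiable ℝ f ∧
    Differentiable ℝ (fderiv ℝ f) ∧
    (∀ w, ‖fderiv ℝ (fderiv ℝ f) w‖ ≤ 2 * (q - 1) / (η * c)) := by
  have hf_eq : f = fun w => η⁻¹ • regLpNorm μ c q (w - s) := by
    funext w
    simp only [hf, regLpNorm, regNorm, ContinuousMap.sub_apply, smul_eq_mul]
    simp_rw [Real.rpow_div_two_eq_sqrt q (by positivity : (0 : ℝ) ≤ c ^ 2 + ‖_‖ ^ 2)]
  have hD : ∀ w, HasFDerivAt f (η⁻¹ • fderiv ℝ (regLpNorm μ c q) (w - s)) w := by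
    rw [hf_eq]
    exact hasFDerivAt_const_smul_comp_sub (differentiable_regLpNorm μ hc.ne' q) η⁻¹ s
  have hD₂ : ∀ w, HasFDerivAt (fderiv ℝ f)
      (η⁻¹ • fderiv ℝ (fderiv ℝ (regLpNorm μ c q)) (w - s)) w := by
    rw [show fderiv ℝ f = _ from funext fun w => (hD w).fderiv]
    exact hasFDerivAt_const_smul_comp_sub (differentiable_fderiv_regLpNorm μ hc.ne' q) η⁻¹ s
  refine ⟨fun w => (hD w).differentiableAt, fun w => (hD₂ w).differentiableAt, fun w => ?_⟩
  calc ‖fderiv ℝ (fderiv ℝ f) w‖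
      = η⁻¹ * ‖fderiv ℝ (fderiv ℝ (regLpNorm μ c q)) (w - s)‖ := by
        rw [(hD₂ w).fderiv, norm_smul, Real.norm_of_nonneg (by positivity)]
    _ ≤ η⁻¹ * (2 * (q - 1) / c) := by
        gcongr
        exact norm_fderiv_fderiv_regLpNorm_le μ hc hq _
    _ = 2 * (q - 1) / (η * c) := by
        field_simp

/-- With `f(w) = η⁻¹ (∫₀¹ (c² + |w(t)−s(t)|²)^{q/2} dt)^{1/q}` on
`C([0,1], ℝ^p)` (sup norm), `c > 0`, `η ∈ (0,1]`, `q ≥ 4`, the function `f` is twice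
Fréchet differentiable and `sup_w ‖D²f(w)‖ ≤ 2(q−1)/(ηc)`. -/
theorem stmt_16 (p : ℕ) (hp : 1 ≤ p)
    (s : C(unitInterval, EuclideanSpace ℝ (Fin p)))
    (c η q : ℝ) (hc : 0 < c) (hη : 0 < η) (hη1 : η ≤ 1) (hq : 4 ≤ q)
    (f : C(unitInterval, EuclideanSpace ℝ (Fin p)) → ℝ)
    (hf : ∀ w, f w
      = η⁻¹ * (∫ t, (c ^ 2 + ‖w t - s t‖ ^ 2) ^ (q / 2)) ^ (1 / q)) :
    Differentiable ℝ f ∧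
    Differentiable ℝ (fderiv ℝ f) ∧
    (∀ w, ‖fderiv ℝ (fderiv ℝ f) w‖ ≤ 2 * (q - 1) / (η * c)) :=
  stmt_16_general volume s c η q hc hη (by linarith) f hf
end
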